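/- (Convergence of the proximal-gradient method for GFlasso.) Fix matrices X ∈ ℝ^{N×J}, Y ∈ ℝ^{N×K}, C ∈ ℝ^{K×M} and ε > 0. Let D = (card J)(card M)/2 and μ = ε/(2D). Suppose c₁ ≥ 0 satisfies ‖Xᵀ X v‖₂ ≤ c₁ ‖v‖₂ for all v ∈ ℝ^J, c₂ ≥ 0 satisfies ‖B C‖_F ≤ c₂ ‖B‖_F for all B, and set L_U = c₁ + c₂²/μ, assumed positive. Define f(B) = (1/2)‖Y − XB‖_F² + ‖B C‖₁ and f̃(B) = (1/2)‖Y − XB‖_F² + f_μ(B), with gradient map g(W) = Xᵀ(X W − Y) + S((W C)/μ) Cᵀ. Define iterates W⁰ = 0, B^t = W^t − (1/L_U) g(W^t), Z^t = −(1/L_U) Σ_{i=0}^{t} ((i+1)/2) g(W^i), W^{t+1} = ((t+1)/(t+3)) B^t + (2/(t+3)) Z^t. Let B* be a global minimizer of f. Then for every integer t ≥ 1 with t ≥ sqrt((4‖B*‖_F²/ε)·(c₁ + 2 D c₂²/ε)), we have f(B^t) − f(B*) ≤ ε. -/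

import Mathlib

/-!
The entrywise `ℓ¹` penalty is the supremum of linear forms `⟨A, B C⟩` over `‖A‖_∞ ≤ 1`; subtracting
`(μ/2)‖A‖_F²` turns each entry's absolute value into a Huber function, which is convex, has a
`1/μ`-Lipschitz derivative given by the shrinkage operator, and lies within `μ/2` below the absolute
value (`huber_le_abs`, `abs_le_huber`). Hence the smoothed objective is convex, is majorized by a
quadratic with constant `c₁ + c₂²/μ` (`smoothed_gradient_le`, `smoothed_le_quadratic`), and is within
`μ D = ε/2` of the original one.

The iteration is Nesterov's accelerated gradient method. With `A_t = (t+1)(t+2)/4`, the potential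
`A_t (F(B^t) - F(x)) + (L/2)‖x - Z^t‖²` does not increase with `t` and is at most `(L/2)‖x‖²`
(`nesterov_potential`), so `F(B^t) - F(x) ≤ 2L‖x‖²/((t+1)(t+2))`. For `t` as large as assumed this is
at most `ε/2`, and the two errors add up to `ε`.
-/

open Finset Matrix

/-! ### The Huber function -/

/-- The derivative of the Huber function with parameter `μ`: the clipping of `x / μ` to `[-1, 1]`. -/
noncomputable def shrink (μ x : ℝ) : ℝ := max (-1) (min 1 (x / μ))

/-- The Huber function `sup {a x - (μ/2) a² : |a| ≤ 1}`, written through its maximizer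
`a = shrink μ x`. -/
noncomputable def huber (μ x : ℝ) : ℝ := shrink μ x * x - μ / 2 * shrink μ x ^ 2

lemma neg_one_le_shrink (μ x : ℝ) : -1 ≤ shrink μ x := le_max_left _ _

lemma shrink_le_one (μ x : ℝ) : shrink μ x ≤ 1 := max_le (by norm_num) (min_le_left _ _)

lemma shrink_cases {μ : ℝ} (hμ : 0 < μ) (x : ℝ) :
    (shrink μ x = -1 ∧ x ≤ -μ) ∨ (shrink μ x = 1 ∧ μ ≤ x) ∨ x = μ * shrink μ x := by
  unfold shrink
  rcases le_total 1 (x / μ) with h | h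
  · right; left
    rw [min_eq_left h, max_eq_right (by norm_num)]
    exact ⟨rfl, by rwa [le_div_iff₀ hμ, one_mul] at h⟩
  · rw [min_eq_right h]
    rcases le_total (-1) (x / μ) with h' | h'
    · right; right
      rw [max_eq_right h']
      field_simp
    · left
      rw [max_eq_left h']
      exact ⟨rfl, by rw [div_le_iff₀ hμ] at h'; linarith⟩

/-- The Huber function dominates every member of the family of affine functions whose supremum
it is. -/
lemma le_huber {μ : ℝ} (hμ : 0 < μ) (x a : ℝ) (h1 : -1 ≤ a) (h2 : a ≤ 1) :
    a * x - μ / 2 * a ^ 2 ≤ huber μ x := by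
  unfold huber
  rcases shrink_cases hμ x with ⟨h, hx⟩ | ⟨h, hx⟩ | h
  · rw [h]
    nlinarith [mul_nonneg (by linarith : 0 ≤ a + 1) (by linarith : 0 ≤ -μ - x),
      mul_nonneg hμ.le (sq_nonneg (a + 1))]
  · rw [h]
    nlinarith [mul_nonneg (by linarith : 0 ≤ 1 - a) (by linarith : 0 ≤ x - μ),
      mul_nonneg hμ.le (sq_nonneg (1 - a))]
  · generalize shrink μ x = s at *
    subst h
    nlinarith [mul_nonneg hμ.le (sq_nonneg (a - s))]

lemma huber_gradient_le {μ : ℝ} (hμ : 0 < μ) (x y : ℝ) :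
    huber μ x + shrink μ x * (y - x) ≤ huber μ y := by
  have := le_huber hμ y _ (neg_one_le_shrink μ x) (shrink_le_one μ x)
  unfold huber at *
  linarith

lemma huber_le_quadratic {μ : ℝ} (hμ : 0 < μ) (x y : ℝ) :
    huber μ y ≤ huber μ x + shrink μ x * (y - x) + 1 / (2 * μ) * (y - x) ^ 2 := by
  have h1 := neg_one_le_shrink μ y
  have h2 := shrink_le_one μ y
  have key : 0 ≤ μ * (huber μ x + shrink μ x * (y - x) - huber μ y) + 1 / 2 * (y - x) ^ 2 := by
    unfold huber
    -- The left side equals `½ (y - x - μ (b - a))²` plus `μ (b - a) (μ a - x)`, where `a` and `b`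
    -- are the shrinkages of `x` and `y`; the second term is nonnegative since `a` is the clipping
    -- of `x / μ`.
    have hs : 0 ≤ μ * ((shrink μ y - shrink μ x) * (μ * shrink μ x - x)) := by
      refine mul_nonneg hμ.le ?_
      rcases shrink_cases hμ x with ⟨h, hx⟩ | ⟨h, hx⟩ | h
      · rw [h]; exact mul_nonneg (by linarith) (by linarith)
      · rw [h]; exact mul_nonneg_of_nonpos_of_nonpos (by linarith) (by linarith)
      · rw [← h]; simp
    nlinarith [sq_nonneg (y - x - μ * (shrink μ y - shrink μ x))]
  have : 0 ≤ (huber μ x + shrink μ x * (y - x) - huber μ y) + 1 / (2 * μ) * (y - x) ^ 2 := by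
    have h3 := div_nonneg key hμ.le
    have h4 : (μ * (huber μ x + shrink μ x * (y - x) - huber μ y) + 1 / 2 * (y - x) ^ 2) / μ
      = (huber μ x + shrink μ x * (y - x) - huber μ y) + 1 / (2 * μ) * (y - x) ^ 2 := by
      field_simp
    rwa [h4] at h3
  linarith

lemma huber_le_abs {μ : ℝ} (hμ : 0 < μ) (x : ℝ) : huber μ x ≤ |x| := by
  have h : shrink μ x * x ≤ |x| := by
    refine (le_abs_self _).trans ?_
    rw [abs_mul]
    exact mul_le_of_le_one_left (abs_nonneg _)
      (abs_le.2 ⟨neg_one_le_shrink μ x, shrink_le_one μ x⟩)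
  unfold huber
  nlinarith [mul_nonneg hμ.le (sq_nonneg (shrink μ x))]

lemma abs_le_huber {μ : ℝ} (hμ : 0 < μ) (x : ℝ) : |x| ≤ huber μ x + μ / 2 := by
  have h1 := le_huber hμ x 1 (by norm_num) le_rfl
  have h2 := le_huber hμ x (-1) le_rfl (by norm_num)
  exact abs_le'.2 ⟨by linarith, by linarith⟩

/-! ### Accelerated gradient descent -/

/-- Potential-function bound for Nesterov's accelerated gradient method, for a function `F` on a
real vector space with a symmetric bilinear form `ip` (in place of an inner product), a
"gradient" `g` satisfying the convexity inequality, and a quadratic upper bound with constant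
`L`. The auxiliary point `Z t` minimizes
`x ↦ (L/2) ip x x + ∑ i ≤ t, (i+1)/2 (F (W i) + ip (g (W i)) (x - W i))`. -/
lemma nesterov_potential {E : Type*} [AddCommGroup E] [Module ℝ E] (ip : E →ₗ[ℝ] E →ₗ[ℝ] ℝ)
    (hsymm : ∀ x y, ip x y = ip y x) (hpos : ∀ x, 0 ≤ ip x x)
    (F : E → ℝ) (g : E → E) (L : ℝ) (hL : 0 < L)
    (hconv : ∀ x y, F x + ip (g x) (y - x) ≤ F y)
    (hsmooth : ∀ x y, F y ≤ F x + ip (g x) (y - x) + L / 2 * ip (y - x) (y - x))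
    (W B Z : ℕ → E) (hW0 : W 0 = 0)
    (hB : ∀ t, B t = W t - (1 / L) • g (W t))
    (hZ : ∀ t, Z t = -((1 / L) • ∑ i ∈ Finset.range (t + 1), (((i : ℝ) + 1) / 2) • g (W i)))
    (hW : ∀ t, W (t + 1) = (((t : ℝ) + 1) / ((t : ℝ) + 3)) • B t + (2 / ((t : ℝ) + 3)) • Z t)
    (x : E) (t : ℕ) :
    ((t : ℝ) + 1) * (t + 2) / 4 * (F (B t) - F x) + L / 2 * ip (x - Z t) (x - Z t)
      ≤ L / 2 * ip x x := by
  -- The decrease of `F` along a gradient step of length `1 / L`.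
  have hdec : ∀ t, F (B t) ≤ F (W t) - 1 / (2 * L) * ip (g (W t)) (g (W t)) := by
    intro t
    have h := hsmooth (W t) (B t)
    have e : B t - W t = -((1 / L) • g (W t)) := by rw [hB]; abel
    rw [e] at h
    simp only [map_neg, map_smul, LinearMap.neg_apply, LinearMap.smul_apply, smul_eq_mul] at h
    refine h.trans (le_of_eq ?_)
    field_simp
    ring
  -- One step of the auxiliary sequence: completing the square at `z - (α / L) • γ`.
  have hsq : ∀ (z γ : E) (α : ℝ), L / 2 * ip (x - (z - (α / L) • γ)) (x - (z - (α / L) • γ))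
      = L / 2 * ip (x - z) (x - z) + α * ip γ (x - z) + α ^ 2 / (2 * L) * ip γ γ := by
    intro z γ α
    have e : x - (z - (α / L) • γ) = (x - z) + (α / L) • γ := by abel
    rw [e]
    simp only [map_add, map_smul, LinearMap.add_apply, LinearMap.smul_apply, smul_eq_mul]
    rw [hsymm (x - z) γ]
    field_simp
    ring
  induction t with
  | zero =>
    have hZ0 : Z 0 = 0 - ((1 / 2) / L) • g (W 0) := by
      rw [hZ 0]
      simp only [zero_add, Finset.sum_range_one, Nat.cast_zero, smul_smul, zero_sub]
      congr 2
      ring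
    have h1 := hdec 0
    have h2 := hconv (W 0) x
    have h3 := hsq 0 (g (W 0)) (1 / 2)
    rw [hZ0, h3]
    rw [hW0] at h1 h2 ⊢
    simp only [sub_zero] at *
    have h4 : 0 ≤ 1 / (8 * L) * ip (g 0) (g 0) := mul_nonneg (by positivity) (hpos _)
    have e1 : (1 / 2 : ℝ) ^ 2 / (2 * L) * ip (g 0) (g 0) = 1 / (8 * L) * ip (g 0) (g 0) := by
      congr 1; field_simp; norm_num
    have e2 : 1 / (2 * L) * ip (g 0) (g 0) = 4 * (1 / (8 * L) * ip (g 0) (g 0)) := by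
      rw [← mul_assoc]; congr 1; field_simp; norm_num
    rw [e2] at h1
    rw [e1]
    push_cast
    linarith
  | succ t ih =>
    have hZs : Z (t + 1) = Z t - ((((t : ℝ) + 2) / 2) / L) • g (W (t + 1)) := by
      rw [hZ (t + 1), hZ t, Finset.sum_range_succ _ (t + 1), smul_add, smul_smul, neg_add,
        ← sub_eq_add_neg]
      congr 2
      push_cast
      ring
    have h1 := hdec (t + 1)
    have h2 := hconv (W (t + 1)) x
    have h3 := hconv (W (t + 1)) (B t)
    have h4 := hsq (Z t) (g (W (t + 1))) (((t : ℝ) + 2) / 2)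
    rw [hZs, h4]
    have ht : (0 : ℝ) ≤ t := Nat.cast_nonneg t
    have hG : 0 ≤ 1 / (2 * L) * ip (g (W (t + 1))) (g (W (t + 1))) :=
      mul_nonneg (by positivity) (hpos _)
    -- `W (t + 1)` is the average of `B t` and `Z t` with weights proportional to
    -- `(t + 1)(t + 2)/4` and `(t + 2)/2`.
    have hlin : ((t : ℝ) + 1) * (t + 2) / 4 * ip (g (W (t + 1))) (B t - W (t + 1))
        + ((t : ℝ) + 2) / 2 * ip (g (W (t + 1))) (x - W (t + 1))
        = ((t : ℝ) + 2) / 2 * ip (g (W (t + 1))) (x - Z t) := by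
      have hw : ip (g (W (t + 1))) (W (t + 1)) = ((t : ℝ) + 1) / (t + 3) * ip (g (W (t + 1))) (B t)
          + 2 / ((t : ℝ) + 3) * ip (g (W (t + 1))) (Z t) := by
        conv_lhs => rw [show ip (g (W (t + 1))) (W (t + 1)) = ip (g (W (t + 1)))
          ((((t : ℝ) + 1) / ((t : ℝ) + 3)) • B t + (2 / ((t : ℝ) + 3)) • Z t) from by rw [← hW t]]
        simp only [map_add, map_smul, smul_eq_mul]
      simp only [map_sub]
      rw [hw]
      field_simp
      ring
    have e1 : (((t : ℝ) + 2) / 2) ^ 2 / (2 * L) * ip (g (W (t + 1))) (g (W (t + 1)))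
        = (((t : ℝ) + 2) / 2) ^ 2 * (1 / (2 * L) * ip (g (W (t + 1))) (g (W (t + 1)))) := by ring
    rw [e1]
    generalize 1 / (2 * L) * ip (g (W (t + 1))) (g (W (t + 1))) = G at *
    have m1 := mul_le_mul_of_nonneg_left h1 (by positivity : 0 ≤ ((t : ℝ) + 2) * (t + 3) / 4)
    have m2 := mul_le_mul_of_nonneg_left h2 (by positivity : 0 ≤ ((t : ℝ) + 2) / 2)
    have m3 := mul_le_mul_of_nonneg_left h3 (by positivity : 0 ≤ ((t : ℝ) + 1) * (t + 2) / 4)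
    have m4 : 0 ≤ ((t : ℝ) + 2) / 4 * G := by positivity
    push_cast
    linarith

/-! ### The Frobenius inner product -/

/-- The Frobenius inner product as a bilinear form. -/
noncomputable def frob {m n : Type*} [Fintype m] [Fintype n] :
    Matrix m n ℝ →ₗ[ℝ] Matrix m n ℝ →ₗ[ℝ] ℝ :=
  LinearMap.mk₂ ℝ (fun A B => ∑ i, ∑ j, A i j * B i j)
    (fun A A' B => by simp [add_mul, Finset.sum_add_distrib])
    (fun c A B => by simp [mul_assoc, Finset.mul_sum])
    (fun A B B' => by simp [mul_add, Finset.sum_add_distrib])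
    (fun c A B => by simp [mul_left_comm, Finset.mul_sum])

section Frobenius

variable {m n p : Type*} [Fintype m] [Fintype n] [Fintype p]

lemma frob_apply (A B : Matrix m n ℝ) : frob A B = ∑ i, ∑ j, A i j * B i j := rfl

lemma frob_self (A : Matrix m n ℝ) : frob A A = ∑ i, ∑ j, A i j ^ 2 := by
  simp [frob_apply, sq]

lemma frob_comm (A B : Matrix m n ℝ) : frob A B = frob B A := by
  simp [frob_apply, mul_comm]

lemma frob_self_nonneg (A : Matrix m n ℝ) : 0 ≤ frob A A := by
  rw [frob_self]; positivity

lemma frob_eq_trace (A B : Matrix m n ℝ) : frob A B = (Aᵀ * B).trace := by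
  simp only [frob_apply, Matrix.trace, Matrix.diag, Matrix.mul_apply, Matrix.transpose_apply]
  exact Finset.sum_comm

lemma frob_transpose_mul (X : Matrix p m ℝ) (A : Matrix p n ℝ) (V : Matrix m n ℝ) :
    frob (Xᵀ * A) V = frob A (X * V) := by
  simp [frob_eq_trace, Matrix.mul_assoc]

lemma frob_mul_transpose (C : Matrix n p ℝ) (S : Matrix m p ℝ) (V : Matrix m n ℝ) :
    frob (S * Cᵀ) V = frob S (V * C) := by
  rw [frob_eq_trace, frob_eq_trace, Matrix.transpose_mul, Matrix.transpose_transpose,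
    Matrix.mul_assoc, Matrix.trace_mul_comm, Matrix.mul_assoc]

/-- An operator-norm bound on `Xᵀ X` controls the Frobenius norm of `X U`, by Cauchy–Schwarz in
each column. -/
lemma frob_mul_self_le (X : Matrix p m ℝ) (c : ℝ)
    (hX : ∀ v : m → ℝ,
      Real.sqrt (∑ j, ((Xᵀ * X) *ᵥ v) j ^ 2) ≤ c * Real.sqrt (∑ j, (v j) ^ 2))
    (U : Matrix m n ℝ) : frob (X * U) (X * U) ≤ c * frob U U := by
  rw [← frob_transpose_mul, ← Matrix.mul_assoc, frob_self, frob_apply, Finset.sum_comm,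
    Finset.sum_comm (f := fun i j => U i j ^ 2), Finset.mul_sum]
  refine Finset.sum_le_sum fun k _ => ?_
  have h1 := hX (fun j => U j k)
  have h2 := Real.sum_mul_le_sqrt_mul_sqrt Finset.univ
    (fun j => ((Xᵀ * X) *ᵥ (fun j => U j k)) j) (fun j => U j k)
  have h3 : 0 ≤ ∑ j, U j k ^ 2 := by positivity
  calc ∑ j, (Xᵀ * X * U) j k * U j k
      = ∑ j, ((Xᵀ * X) *ᵥ (fun j => U j k)) j * U j k := rfl
    _ ≤ _ := h2
    _ ≤ (c * Real.sqrt (∑ j, U j k ^ 2)) * Real.sqrt (∑ j, U j k ^ 2) :=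
        mul_le_mul_of_nonneg_right h1 (Real.sqrt_nonneg _)
    _ = c * ∑ j, U j k ^ 2 := by rw [mul_assoc, Real.mul_self_sqrt h3]

end Frobenius

/-! ### The smoothed objective -/

section Objective

variable {N J K M : Type*} [Fintype N] [Fintype J] [Fintype K] [Fintype M]

/-- The smoothed objective `½‖Y - X B‖_F² + f_μ(B)`, with `f_μ` written as a sum of Huber
functions of the entries of `B C`. -/
noncomputable def smoothed (X : Matrix N J ℝ) (Y : Matrix N K ℝ) (C : Matrix K M ℝ) (μ : ℝ)
    (B : Matrix J K ℝ) : ℝ :=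
  1 / 2 * frob (Y - X * B) (Y - X * B) + ∑ j, ∑ m, huber μ ((B * C) j m)

/-- The gradient of `smoothed`. -/
noncomputable def smoothedGrad (X : Matrix N J ℝ) (Y : Matrix N K ℝ) (C : Matrix K M ℝ) (μ : ℝ)
    (W : Matrix J K ℝ) : Matrix J K ℝ :=
  Xᵀ * (X * W - Y) + (Matrix.of fun j m => shrink μ ((W * C) j m)) * Cᵀ

variable (X : Matrix N J ℝ) (Y : Matrix N K ℝ) (C : Matrix K M ℝ) {μ : ℝ}

lemma frob_smoothedGrad (W V : Matrix J K ℝ) :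
    frob (smoothedGrad X Y C μ W) (V - W) = frob (X * W - Y) (X * (V - W))
      + ∑ j, ∑ m, shrink μ ((W * C) j m) * ((V * C) j m - (W * C) j m) := by
  rw [smoothedGrad, map_add, LinearMap.add_apply, frob_transpose_mul, frob_mul_transpose,
    Matrix.sub_mul, frob_apply (Matrix.of _)]
  simp

lemma residual_expand (W V : Matrix J K ℝ) :
    frob (Y - X * V) (Y - X * V) = frob (Y - X * W) (Y - X * W)
      + 2 * frob (X * W - Y) (X * (V - W)) + frob (X * (V - W)) (X * (V - W)) := by
  have e1 : Y - X * V = -((X * W - Y) + X * (V - W)) := by rw [Matrix.mul_sub]; abel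
  have e2 : Y - X * W = -(X * W - Y) := by abel
  rw [e1, e2]
  simp only [map_neg, map_add, LinearMap.neg_apply, LinearMap.add_apply]
  rw [frob_comm (X * (V - W)) (X * W - Y)]
  ring

lemma smoothed_gradient_le (hμ : 0 < μ) (W V : Matrix J K ℝ) :
    smoothed X Y C μ W + frob (smoothedGrad X Y C μ W) (V - W) ≤ smoothed X Y C μ V := by
  rw [frob_smoothedGrad, smoothed, smoothed, residual_expand X Y W V]
  have h : ∑ j, ∑ m, huber μ ((W * C) j m)
      + ∑ j, ∑ m, shrink μ ((W * C) j m) * ((V * C) j m - (W * C) j m)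
      ≤ ∑ j, ∑ m, huber μ ((V * C) j m) := by
    simp only [← Finset.sum_add_distrib]
    exact Finset.sum_le_sum fun j _ => Finset.sum_le_sum fun m _ => huber_gradient_le hμ _ _
  have := frob_self_nonneg (X * (V - W))
  linarith

lemma smoothed_le_quadratic (hμ : 0 < μ) (c₁ c₂ : ℝ)
    (hX : ∀ U : Matrix J K ℝ, frob (X * U) (X * U) ≤ c₁ * frob U U)
    (hC : ∀ U : Matrix J K ℝ, frob (U * C) (U * C) ≤ c₂ ^ 2 * frob U U)
    (W V : Matrix J K ℝ) :
    smoothed X Y C μ V ≤ smoothed X Y C μ W + frob (smoothedGrad X Y C μ W) (V - W)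
      + (c₁ + c₂ ^ 2 / μ) / 2 * frob (V - W) (V - W) := by
  rw [frob_smoothedGrad, smoothed, smoothed, residual_expand X Y W V]
  have h : ∑ j, ∑ m, huber μ ((V * C) j m) ≤ ∑ j, ∑ m, huber μ ((W * C) j m)
      + ∑ j, ∑ m, shrink μ ((W * C) j m) * ((V * C) j m - (W * C) j m)
      + 1 / (2 * μ) * frob ((V - W) * C) ((V - W) * C) := by
    rw [frob_self]
    simp only [Finset.mul_sum, ← Finset.sum_add_distrib]
    refine Finset.sum_le_sum fun j _ => Finset.sum_le_sum fun m _ => ?_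
    rw [Matrix.sub_mul, Matrix.sub_apply]
    exact huber_le_quadratic hμ _ _
  have h1 := hX (V - W)
  have h2 := mul_le_mul_of_nonneg_left (hC (V - W)) (by positivity : 0 ≤ 1 / (2 * μ))
  have e : 1 / (2 * μ) * (c₂ ^ 2 * frob (V - W) (V - W))
      = c₂ ^ 2 / μ / 2 * frob (V - W) (V - W) := by field_simp
  rw [e] at h2
  linarith

end Objective

/-! ### Convergence -/

/-- Convergence of the proximal-gradient method for GFlasso: with `μ = ε/(2D)`,
`L_U = c₁ + c₂²/μ`, and the Nesterov iterates, once
`t ≥ sqrt((4‖B*‖_F²/ε)(c₁ + 2Dc₂²/ε))` we have `f(B^t) − f(B*) ≤ ε`. -/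
theorem stmt_14 {N J K M : Type*} [Fintype N] [Fintype J] [Fintype K] [Fintype M]
    [Nonempty N] [Nonempty J] [Nonempty K] [Nonempty M]
    (X : Matrix N J ℝ) (Y : Matrix N K ℝ) (C : Matrix K M ℝ)
    (ε : ℝ) (hε : 0 < ε)
    (D : ℝ) (hD : D = (Fintype.card J : ℝ) * (Fintype.card M : ℝ) / 2)
    (μ : ℝ) (hμ : μ = ε / (2 * D))
    (c₁ : ℝ) (hc₁ : 0 ≤ c₁)
    (hX : ∀ v : J → ℝ,
      Real.sqrt (∑ j, ((Xᵀ * X) *ᵥ v) j ^ 2) ≤ c₁ * Real.sqrt (∑ j, (v j) ^ 2))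
    (c₂ : ℝ) (hc₂ : 0 ≤ c₂)
    (hC : ∀ B : Matrix J K ℝ,
      Real.sqrt (∑ j, ∑ m, ((B * C) j m) ^ 2) ≤ c₂ * Real.sqrt (∑ j, ∑ k, (B j k) ^ 2))
    (LU : ℝ) (hLU : LU = c₁ + c₂ ^ 2 / μ) (hLUpos : 0 < LU)
    (f : Matrix J K ℝ → ℝ)
    (hf : ∀ B, f B = 1 / 2 * ∑ n, ∑ k, ((Y - X * B) n k) ^ 2
        + ∑ j, ∑ m, |(B * C) j m|)
    (g : Matrix J K ℝ → Matrix J K ℝ)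
    (hg : ∀ W, g W = Xᵀ * (X * W - Y)
        + (Matrix.of fun j m => max (-1) (min 1 ((W * C) j m / μ))) * Cᵀ)
    (W B Z : ℕ → Matrix J K ℝ)
    (hW0 : W 0 = 0)
    (hB : ∀ t, B t = W t - (1 / LU) • g (W t))
    (hZ : ∀ t, Z t = -((1 / LU) • ∑ i ∈ Finset.range (t + 1), (((i : ℝ) + 1) / 2) • g (W i)))
    (hW : ∀ t, W (t + 1) = (((t : ℝ) + 1) / ((t : ℝ) + 3)) • B t + (2 / ((t : ℝ) + 3)) • Z t)
    (Bstar : Matrix J K ℝ) (hmin : ∀ B' : Matrix J K ℝ, f Bstar ≤ f B') :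
    ∀ t : ℕ, 1 ≤ t →
      Real.sqrt (4 * (∑ j, ∑ k, (Bstar j k) ^ 2) / ε * (c₁ + 2 * D * c₂ ^ 2 / ε)) ≤ (t : ℝ) →
      f (B t) - f Bstar ≤ ε := by
  intro t _ htε
  have hJ : (0 : ℝ) < Fintype.card J := by exact_mod_cast Fintype.card_pos
  have hM : (0 : ℝ) < Fintype.card M := by exact_mod_cast Fintype.card_pos
  have hDpos : 0 < D := by rw [hD]; positivity
  have hμpos : 0 < μ := by rw [hμ]; positivity
  have hC' : ∀ U : Matrix J K ℝ, frob (U * C) (U * C) ≤ c₂ ^ 2 * frob U U := by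
    intro U
    have h := hC U
    rw [← frob_self, ← frob_self] at h
    have h2 := pow_le_pow_left₀ (Real.sqrt_nonneg _) h 2
    rwa [mul_pow, Real.sq_sqrt (frob_self_nonneg _), Real.sq_sqrt (frob_self_nonneg _)] at h2
  obtain rfl : g = smoothedGrad X Y C μ := funext hg
  have hpot := nesterov_potential frob frob_comm frob_self_nonneg (smoothed X Y C μ)
    (smoothedGrad X Y C μ) LU hLUpos (smoothed_gradient_le X Y C hμpos)
    (by
      rw [hLU]
      exact smoothed_le_quadratic X Y C hμpos c₁ c₂ (frob_mul_self_le X c₁ hX) hC')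
    W B Z hW0 hB hZ hW Bstar t
  have hlow : smoothed X Y C μ Bstar ≤ f Bstar := by
    rw [hf, smoothed, frob_self]
    gcongr
    exact huber_le_abs hμpos _
  have hup : f (B t) ≤ smoothed X Y C μ (B t) + ε / 2 := by
    have h : ∑ j, ∑ m, |(B t * C) j m| ≤ ∑ j, ∑ m, (huber μ ((B t * C) j m) + μ / 2) := by
      gcongr
      exact abs_le_huber hμpos _
    have e : ∑ _j : J, ∑ _m : M, μ / 2 = ε / 2 := by
      have hε2 : ε = μ * (2 * D) := by rw [hμ]; field_simp
      simp only [Finset.sum_const, Finset.card_univ, nsmul_eq_mul]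
      rw [hε2, hD]
      ring
    simp only [Finset.sum_add_distrib] at h
    rw [e] at h
    rw [hf, smoothed, frob_self]
    linarith
  -- The hypothesis on `t` says `4 L ‖B*‖² ≤ ε t²`.
  have ht2 : 4 * LU * frob Bstar Bstar ≤ ε * (t : ℝ) ^ 2 := by
    have h := (Real.sqrt_le_left (Nat.cast_nonneg t)).1 htε
    have e : 4 * (∑ j, ∑ k, Bstar j k ^ 2) / ε * (c₁ + 2 * D * c₂ ^ 2 / ε)
        = 4 * LU * frob Bstar Bstar / ε := by
      rw [frob_self, hLU, hμ]
      field_simp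
    rw [e, div_le_iff₀ hε] at h
    linarith
  have hZn : 0 ≤ LU / 2 * frob (Bstar - Z t) (Bstar - Z t) :=
    mul_nonneg (by positivity) (frob_self_nonneg _)
  have ht : (0 : ℝ) ≤ t := Nat.cast_nonneg t
  have hfin : smoothed X Y C μ (B t) - smoothed X Y C μ Bstar ≤ ε / 2 := by
    have hA : (0 : ℝ) < ((t : ℝ) + 1) * (t + 2) / 4 := by positivity
    refine le_of_mul_le_mul_left ?_ hA
    nlinarith [mul_nonneg hε.le ht]
  linarith
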